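/- Let 𝓓 = (Ω, 𝓑) be a β(i) design with parameter (v, k, d), set c = k−d, and fix a block B ∈ 𝓑. Let μ_d = |{C ∈ 𝓑 : |C ∩ B| = d}|. Then μ_d = C(v−k, i)·C(k, d+i−1) / ( C(c, i)·C(c, i−1) ); in particular μ_d is independent of the choice of B ∈ 𝓑. -/

import Mathlib

open Finset

variable {α : Type*} [Fintype α] [DecidableEq α]

/-- `𝓑` is a design on the finite type `α` of cardinality `v`, with block size `k` and
maximal pairwise block intersection size `d`. -/
def IsDesign (𝓑 : Finset (Finset α)) (v k d : ℕ) : Prop :=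
  Fintype.card α = v ∧ 2 ≤ 𝓑.card ∧ d < k ∧ k < v ∧
  (∀ B ∈ 𝓑, B.card = k) ∧
  (∀ B ∈ 𝓑, ∀ C ∈ 𝓑, B ≠ C → (B ∩ C).card ≤ d) ∧
  (∃ B ∈ 𝓑, ∃ C ∈ 𝓑, B ≠ C ∧ (B ∩ C).card = d)

/-- `𝓑` is a `β(i)` design with parameters `(v, k, d)`: a design such that
`1 ≤ i ≤ (v - d + 1)/2` and every `(d + 2i - 1)`-element subset `X` of `Ω` admits a
unique block `B` with `|X ∩ B| ≥ d + i`. -/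
def IsBetaDesign (𝓑 : Finset (Finset α)) (v k d i : ℕ) : Prop :=
  IsDesign 𝓑 v k d ∧ 1 ≤ i ∧ 2 * i ≤ v - d + 1 ∧
  ∀ X : Finset α, X.card = d + 2 * i - 1 →
    ∃! B, B ∈ 𝓑 ∧ d + i ≤ (X ∩ B).card

/-!
Count in two ways the triples `(C, S, T)`, where `C` is a block meeting `B` in `d` points,
`S ⊆ B` has `d + i - 1` points, `T ⊆ Bᶜ` has `i` points, `C ∩ B ⊆ S` and `T ⊆ C`.
The set `X = S ∪ T` has `d + 2i - 1` points, and a block `C ≠ B` meets it in at most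
`|C ∩ B| + |T| ≤ d + i` points, with equality exactly when `(C, S, T)` is such a triple; `B` itself
meets `X` in only `d + i - 1` points. So each pair `(S, T)` extends to exactly one triple, while
each `C` occurs in `(k - d).choose (i - 1) * (k - d).choose i` of them.
-/

section Finset

variable {β : Type*} [DecidableEq β] {𝓑 : Finset (Finset β)} {B C S T : Finset β} {d : ℕ}

lemma filter_powersetCard_superset (s t : Finset β) (n : ℕ) :
    {u ∈ t.powersetCard n | u ⊆ s} = (t ∩ s).powersetCard n := by
  grind

lemma add_card_le_card_union_inter_iff (hSB : S ⊆ B) (hTB : Disjoint T B) (hCB : #(C ∩ B) ≤ d) :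
    d + #T ≤ #((S ∪ T) ∩ C) ↔ #(C ∩ B) = d ∧ C ∩ B ⊆ S ∧ T ⊆ C := by
  have hST : Disjoint S T := hTB.symm.mono_left hSB
  have hSC : S ∩ C ⊆ C ∩ B := subset_inter inter_subset_right (inter_subset_left.trans hSB)
  have hcard : #((S ∪ T) ∩ C) = #(S ∩ C) + #(T ∩ C) := by
    rw [union_inter_distrib_right,
      card_union_of_disjoint (hST.mono inter_subset_left inter_subset_left)]
  have hSC_le : #(S ∩ C) ≤ #(C ∩ B) := card_le_card hSC
  have hTC_le : #(T ∩ C) ≤ #T := card_le_card inter_subset_left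
  constructor
  · intro h
    have hSC_eq : S ∩ C = C ∩ B := eq_of_subset_of_card_le hSC (by omega)
    have hTC_eq : T ∩ C = T := eq_of_subset_of_card_le inter_subset_left (by omega)
    exact ⟨by omega, hSC_eq ▸ inter_subset_left, inter_eq_left.mp hTC_eq⟩
  · rintro ⟨hCd, hCS, hTC⟩
    have hSC_eq : S ∩ C = C ∩ B := hSC.antisymm (subset_inter hCS inter_subset_left)
    rw [hcard, hSC_eq, hCd, inter_eq_left.mpr hTC]

lemma existsUnique_card_inter_eq_and_subset (hSB : S ⊆ B) (hTB : Disjoint T B)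
    (hS : #S < d + #T) (hd : ∀ C ∈ 𝓑, C ≠ B → #(C ∩ B) ≤ d)
    (hX : ∃! C, C ∈ 𝓑 ∧ d + #T ≤ #((S ∪ T) ∩ C)) :
    ∃! C, (C ∈ 𝓑 ∧ #(C ∩ B) = d) ∧ C ∩ B ⊆ S ∧ T ⊆ C := by
  obtain ⟨C, ⟨hC, hCX⟩, hunique⟩ := hX
  have hCB : C ≠ B := by
    rintro rfl
    rw [union_inter_distrib_right, disjoint_iff_inter_eq_empty.mp hTB, union_empty,
      inter_eq_left.mpr hSB] at hCX
    exact hCX.not_gt hS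
  obtain ⟨hCd, hCS, hTC⟩ := (add_card_le_card_union_inter_iff hSB hTB (hd C hC hCB)).mp hCX
  refine ⟨C, ⟨⟨hC, hCd⟩, hCS, hTC⟩, ?_⟩
  rintro D ⟨⟨hD, hDd⟩, hDS, hTD⟩
  exact hunique D
    ⟨hD, (add_card_le_card_union_inter_iff hSB hTB hDd.le).mpr ⟨hDd, hDS, hTD⟩⟩

end Finset

lemma card_filter_inter_subset_and_subset (B C : Finset α) {m : ℕ} (n : ℕ) (hm : #(C ∩ B) ≤ m) :
    #{p ∈ B.powersetCard m ×ˢ Bᶜ.powersetCard n | C ∩ B ⊆ p.1 ∧ p.2 ⊆ C} =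
      (#B - #(C ∩ B)).choose (m - #(C ∩ B)) * (#(C \ B)).choose n := by
  rw [filter_product (C ∩ B ⊆ ·) (· ⊆ C), card_product,
    card_filter_powersetCard_subset _ _ _ inter_subset_right hm, filter_powersetCard_superset,
    card_powersetCard, inter_comm Bᶜ, ← sdiff_eq_inter_compl]

theorem sum_choose_mul_choose_of_existsUnique {𝓑 : Finset (Finset α)} {B : Finset α} {d i : ℕ}
    (hi : 1 ≤ i) (hd : ∀ C ∈ 𝓑, C ≠ B → #(C ∩ B) ≤ d)
    (hX : ∀ X : Finset α, #X = d + 2 * i - 1 → ∃! C, C ∈ 𝓑 ∧ d + i ≤ #(X ∩ C)) :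
    ∑ C ∈ 𝓑 with #(C ∩ B) = d, (#B - d).choose (i - 1) * (#(C \ B)).choose i =
      (#B).choose (d + i - 1) * (#Bᶜ).choose i := by
  let P := B.powersetCard (d + i - 1) ×ˢ Bᶜ.powersetCard i
  let r (C : Finset α) (p : Finset α × Finset α) : Prop := C ∩ B ⊆ p.1 ∧ p.2 ⊆ C
  calc ∑ C ∈ 𝓑 with #(C ∩ B) = d, (#B - d).choose (i - 1) * (#(C \ B)).choose i
      = ∑ C ∈ 𝓑 with #(C ∩ B) = d, #(P.bipartiteAbove r C) := by
        refine sum_congr rfl fun C hC ↦ ?_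
        obtain ⟨-, rfl⟩ := mem_filter.mp hC
        rw [bipartiteAbove, card_filter_inter_subset_and_subset B C i (by omega),
          Nat.add_sub_assoc hi, Nat.add_sub_cancel_left]
    _ = ∑ p ∈ P, #({C ∈ 𝓑 | #(C ∩ B) = d}.bipartiteBelow r p) :=
        sum_card_bipartiteAbove_eq_sum_card_bipartiteBelow r
    _ = ∑ p ∈ P, 1 := by
        refine sum_congr rfl fun ⟨S, T⟩ hp ↦ ?_
        obtain ⟨⟨hSB, hS⟩, hTB, rfl⟩ : (S ⊆ B ∧ #S = d + i - 1) ∧ T ⊆ Bᶜ ∧ #T = i := by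
          simpa only [P, mem_product, mem_powersetCard] using hp
        replace hTB : Disjoint T B := subset_compl_iff_disjoint_right.mp hTB
        have hST : #(S ∪ T) = d + 2 * #T - 1 := by
          rw [card_union_of_disjoint (hTB.symm.mono_left hSB)]; omega
        rw [card_eq_one_iff_existsUnique]
        simpa only [bipartiteBelow, mem_filter] using
          existsUnique_card_inter_eq_and_subset hSB hTB (by omega) hd (hX _ hST)
    _ = (#B).choose (d + i - 1) * (#Bᶜ).choose i := by
        rw [← card_eq_sum_ones, card_product, card_powersetCard, card_powersetCard]

lemma IsBetaDesign.le_sub {𝓑 : Finset (Finset α)} {v k d i : ℕ} (h : IsBetaDesign 𝓑 v k d i) :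
    i ≤ k - d := by
  obtain ⟨⟨hv, -, hdk, hkv, hk, -⟩, -, hiv, hX⟩ := h
  obtain ⟨X, -, hXcard⟩ := exists_subset_card_eq (s := (univ : Finset α)) (n := d + 2 * i - 1)
    (by rw [card_univ]; omega)
  obtain ⟨C, ⟨hC, hXC⟩, -⟩ := hX X hXcard
  have hXC_le : #(X ∩ C) ≤ k := hk C hC ▸ card_le_card inter_subset_right
  omega

/-- **Proposition 5.2.** Let `𝓑` be a `β(i)` design with parameter `(v, k, d)`,
`c = k - d`, and fix a block `B ∈ 𝓑`.  Then
`μ_d = |{C ∈ 𝓑 : |C ∩ B| = d}| = C(v-k, i) C(k, d+i-1) / (C(c, i) C(c, i-1))`;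
in particular `μ_d` does not depend on the choice of `B`. -/
theorem mu_d_formula (𝓑 : Finset (Finset α)) (v k d i c : ℕ)
    (hB : IsBetaDesign 𝓑 v k d i) (hc : c = k - d) (B : Finset α) (hBmem : B ∈ 𝓑) :
    ((𝓑.filter (fun C => (C ∩ B).card = d)).card : ℝ) =
      (((v - k).choose i : ℝ) * (k.choose (d + i - 1) : ℝ))
        / ((c.choose i : ℝ) * (c.choose (i - 1) : ℝ)) := by
  have hic : i ≤ c := hc ▸ hB.le_sub
  obtain ⟨⟨hv, -, -, -, hk, hd, -⟩, hi, -, hX⟩ := hB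
  have hcount := sum_choose_mul_choose_of_existsUnique hi
    (fun C hC hCB ↦ hd C hC B hBmem hCB) hX
  have hterm : ∀ C ∈ 𝓑.filter (fun C ↦ #(C ∩ B) = d),
      (#B - d).choose (i - 1) * (#(C \ B)).choose i = c.choose i * c.choose (i - 1) := by
    intro C hC
    obtain ⟨hC, hCd⟩ := mem_filter.mp hC
    have hsdiff : #(C \ B) = c := by rw [card_sdiff, inter_comm, hCd, hk C hC, hc]
    rw [hsdiff, hk B hBmem, ← hc, mul_comm]
  rw [sum_const_nat hterm, card_compl, hv, hk B hBmem, mul_comm (k.choose _)] at hcount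
  have hchoose_pos : 0 < c.choose i := Nat.choose_pos hic
  have hchoose_pred_pos : 0 < c.choose (i - 1) := Nat.choose_pos ((Nat.sub_le i 1).trans hic)
  rw [eq_div_iff (by positivity)]
  exact_mod_cast hcount
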